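/- arXiv:math/9411210 — 2 statements merged into one kernel-verified Lean document; each statement's English description precedes it below -/
import Mathlib

section
/- Let m ≥ 3 and let N be a symmetric lattice norm on ℝ^m (functions Fin m → ℝ) which has property (P′) and which is not proportional to any ℓ_p-norm for 1 ≤ p ≤ ∞ (no c > 0 and p ∈ [1,∞] with N(x) = c·(∑|x_i|^p)^{1/p} for all x, where p = ∞ gives the max-norm). Let H be a real Hilbert space with dim H ≥ 2 (finite-dimensional or separable infinite-dimensional), and equip X = (Fin m → H) with the norm ‖f‖ = N(fun i => ‖f i‖_H). Then every Flinn element u = (u_i)_{i} of X is supported on a single coordinate: there exists i₀ such that u i = 0 for all i ≠ i₀. -/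
open scoped RealInnerProductSpace

/-- `N` is a norm on `Fin m → ℝ`. -/
def IsNorm {m : ℕ} (N : (Fin m → ℝ) → ℝ) : Prop :=
  (∀ x, N x = 0 ↔ x = 0) ∧
  (∀ (c : ℝ) (x : Fin m → ℝ), N (c • x) = |c| * N x) ∧
  (∀ x y, N (x + y) ≤ N x + N y)

/-- `N` is a lattice norm: it depends only on coordinatewise absolute values, monotonically. -/
def IsLatticeNorm {m : ℕ} (N : (Fin m → ℝ) → ℝ) : Prop :=
  IsNorm N ∧ (∀ x, N x = N fun i => |x i|) ∧
  ∀ x y : Fin m → ℝ, (∀ i, |x i| ≤ |y i|) → N x ≤ N y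

/-- `N` is a symmetric lattice norm: a lattice norm invariant under permutations. -/
def IsSymmLatticeNorm {m : ℕ} (N : (Fin m → ℝ) → ℝ) : Prop :=
  IsLatticeNorm N ∧ ∀ (π : Equiv.Perm (Fin m)) (x : Fin m → ℝ), N (x ∘ π) = N x

/-- The dual norm `N′(y) = sup { ∑ i, x i * y i : N x ≤ 1 }`. -/
noncomputable def dualNorm {m : ℕ} (N : (Fin m → ℝ) → ℝ) (y : Fin m → ℝ) : ℝ :=
  sSup {s : ℝ | ∃ x : Fin m → ℝ, N x ≤ 1 ∧ s = ∑ i, x i * y i}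

/-- `N` is proportional to an `ℓ_p`-norm for some `1 ≤ p ≤ ∞`
(the case `p = ∞` being the max-norm). -/
def IsLpNorm {m : ℕ} (N : (Fin m → ℝ) → ℝ) : Prop :=
  (∃ p : ℝ, 1 ≤ p ∧ ∃ c : ℝ, 0 < c ∧
    ∀ x : Fin m → ℝ, N x = c * (∑ i, |x i| ^ p) ^ (1 / p)) ∨
  (∃ c : ℝ, 0 < c ∧ ∀ x : Fin m → ℝ, N x = c * ⨆ i, |x i|)

/-- The norm on `Fin m → H` induced by the norm `N`:  `‖f‖ = N (fun i => ‖f i‖)`. -/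
noncomputable def XNorm {m : ℕ} (N : (Fin m → ℝ) → ℝ) {H : Type*} [NormedAddCommGroup H]
    (f : Fin m → H) : ℝ := N fun i => ‖f i‖

/-- The dual norm of the norm `XNorm N` on `Fin m → H`, where a vector `g : Fin m → H`
is identified with the functional `f ↦ ∑ i, ⟪g i, f i⟫`. -/
noncomputable def XDualNorm {m : ℕ} (N : (Fin m → ℝ) → ℝ) {H : Type*} [NormedAddCommGroup H]
    [InnerProductSpace ℝ H] (g : Fin m → H) : ℝ :=
  sSup {s : ℝ | ∃ f : Fin m → H, XNorm N f ≤ 1 ∧ s = ∑ i, ⟪g i, f i⟫}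

/-- `(u, g)` is a Flinn pair in `(Fin m → H, XNorm N)`, where every continuous linear
functional is represented by a vector `xs : Fin m → H` via `x ↦ ∑ i, ⟪xs i, x i⟫`. -/
def IsVFlinnPair {m : ℕ} (N : (Fin m → ℝ) → ℝ) {H : Type*} [NormedAddCommGroup H]
    [InnerProductSpace ℝ H] (u g : Fin m → H) : Prop :=
  g ≠ 0 ∧ ∀ x xs : Fin m → H,
    (∑ i, ⟪xs i, x i⟫) = XNorm N x * XDualNorm N xs →
    0 ≤ (∑ i, ⟪g i, x i⟫) * (∑ i, ⟪xs i, u i⟫)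

/-- `u` is a Flinn element of `(Fin m → H, XNorm N)`. -/
def IsVFlinn {m : ℕ} (N : (Fin m → ℝ) → ℝ) {H : Type*} [NormedAddCommGroup H]
    [InnerProductSpace ℝ H] (u : Fin m → H) : Prop :=
  ∃ g, IsVFlinnPair N u g

/-! Suppose `a` and `b` are proportional for every norming pair `(a, b)` of a norm `N`. Then the
supporting functional of `N` at `a` is `x ↦ N a / ‖a‖² * ⟪a, x⟫` for the Euclidean inner product, so
`f x = N x / ‖x‖` satisfies `cos ∠(x, y) * f y ≤ f x`. Since `1 - cos ∠(x, y)` is of second order in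
`x - y`, the derivative of `f` vanishes away from the origin, and `N` is a multiple of the Euclidean
norm.

Now let `(u, g)` be a Flinn pair with `g i ≠ 0` and `u j ≠ 0` for some `j ≠ i`. The norming pairs
`(e k, e k)` show that `g k` and `u k` are collinear. As `dim H ≥ 2`, each vector of the unit ball
can be pushed to the unit sphere along a common normal of `g k` and `u k`, without changing its
inner products with them. Hence, for each norming pair `(a, b)`, the functionals
`v ↦ ∑ k, a k * ⟪g k, v k⟫` and `v ↦ ∑ k, b k * ⟪u k, v k⟫` have a nonnegative product everywhere,
so they are proportional. Comparing with the norming pair `(1, 1)` gives `a i * b j = a j * b i`,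
and by symmetry `a` and `b` are proportional. -/

section LinearFunctionals

theorem apply_mul_apply_comm_of_mul_nonneg {E : Type*} [AddCommGroup E] [Module ℝ E]
    {φ ψ : E →ₗ[ℝ] ℝ} (h : ∀ x, 0 ≤ φ x * ψ x) (x y : E) : φ x * ψ y = φ y * ψ x := by
  have hdiscrim : discrim (φ y * ψ y) (φ x * ψ y + φ y * ψ x) (φ x * ψ x) ≤ 0 := by
    refine discrim_le_zero fun t => ?_
    have hline := h (x + t • y)
    simp only [map_add, map_smul, smul_eq_mul] at hline
    linarith
  have hsq : (φ x * ψ y - φ y * ψ x) ^ 2 ≤ 0 := by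
    rw [discrim] at hdiscrim
    linarith
  exact sub_eq_zero.1 (pow_eq_zero_iff two_ne_zero |>.1 (hsq.antisymm (sq_nonneg _)))

theorem apply_mul_apply_comm_of_mul_nonneg_on_sphere {E : Type*} [NormedAddCommGroup E]
    [NormedSpace ℝ E] {φ ψ : E →ₗ[ℝ] ℝ} (h : ∀ x, ‖x‖ = 1 → 0 ≤ φ x * ψ x) (x y : E) :
    φ x * ψ y = φ y * ψ x := by
  refine apply_mul_apply_comm_of_mul_nonneg (fun z => ?_) x y
  rcases eq_or_ne z 0 with rfl | hz
  · simp
  have hunit : ‖‖z‖⁻¹ • z‖ = 1 := by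
    rw [norm_smul, norm_inv, norm_norm, inv_mul_cancel₀ (norm_ne_zero_iff.2 hz)]
  have hscale : φ z * ψ z = ‖z‖ ^ 2 * (φ (‖z‖⁻¹ • z) * ψ (‖z‖⁻¹ • z)) := by
    rw [map_smul, map_smul, smul_eq_mul, smul_eq_mul]
    field_simp
  rw [hscale]
  exact mul_nonneg (sq_nonneg _) (h _ hunit)

end LinearFunctionals

section InnerProductSpace

open InnerProductGeometry Asymptotics Topology

variable {E : Type*} [NormedAddCommGroup E]

theorem exists_norm_add_smul_eq [NormedSpace ℝ E] {v n : E} {r : ℝ} (hv : ‖v‖ ≤ r) (hn : n ≠ 0) :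
    ∃ t : ℝ, ‖v + t • n‖ = r := by
  have hr : 0 ≤ r := (norm_nonneg v).trans hv
  refine mem_range_of_exists_le_of_exists_ge (f := fun t : ℝ => ‖v + t • n‖) (by fun_prop)
    ⟨0, by simpa using hv⟩ ⟨(r + ‖v‖) / ‖n‖, ?_⟩
  have hlarge : ‖((r + ‖v‖) / ‖n‖) • n‖ = r + ‖v‖ := by
    rw [norm_smul, Real.norm_of_nonneg (by positivity), div_mul_cancel₀ _ (norm_ne_zero_iff.2 hn)]
  calc r = ‖((r + ‖v‖) / ‖n‖) • n‖ - ‖v‖ := by rw [hlarge, add_sub_cancel_right]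
    _ ≤ ‖((r + ‖v‖) / ‖n‖) • n + v‖ := norm_sub_le_norm_add _ _
    _ = ‖v + ((r + ‖v‖) / ‖n‖) • n‖ := by rw [add_comm]

variable [InnerProductSpace ℝ E]

theorem exists_ne_zero_inner_eq_zero (hE : 1 < Module.rank ℝ E) (w : E) :
    ∃ n : E, n ≠ 0 ∧ ⟪w, n⟫ = 0 := by
  by_contra! hker
  have hinj : Function.Injective (innerₛₗ ℝ w) :=
    (injective_iff_map_eq_zero _).2 fun n hn => by_contra fun hn0 => hker n hn0 hn
  simpa using (LinearMap.lift_rank_le_of_injective _ hinj).trans_lt' (Cardinal.lift_lt.2 hE)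

theorem exists_norm_eq_one_inner_eq_inner (hE : 1 < Module.rank ℝ E) {g u v : E}
    (hgu : ∀ x y, ⟪g, x⟫ * ⟪u, y⟫ = ⟪g, y⟫ * ⟪u, x⟫) (hv : ‖v‖ ≤ 1) :
    ∃ w : E, ‖w‖ = 1 ∧ ⟪g, w⟫ = ⟪g, v⟫ ∧ ⟪u, w⟫ = ⟪u, v⟫ := by
  obtain ⟨n, hn, hgn, hun⟩ : ∃ n : E, n ≠ 0 ∧ ⟪g, n⟫ = 0 ∧ ⟪u, n⟫ = 0 := by
    rcases eq_or_ne u 0 with rfl | hu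
    · obtain ⟨n, hn, hgn⟩ := exists_ne_zero_inner_eq_zero hE g
      exact ⟨n, hn, hgn, inner_zero_left n⟩
    · obtain ⟨n, hn, hun⟩ := exists_ne_zero_inner_eq_zero hE u
      refine ⟨n, hn, ?_, hun⟩
      simpa [hun, hu] using hgu n u
  obtain ⟨t, ht⟩ := exists_norm_add_smul_eq hv hn
  refine ⟨v + t • n, ht, ?_, ?_⟩
  · rw [inner_add_right, real_inner_smul_right, hgn, mul_zero, add_zero]
  · rw [inner_add_right, real_inner_smul_right, hun, mul_zero, add_zero]

theorem one_sub_cos_angle_le {x y : E} (hx : x ≠ 0) (hy : y ≠ 0) :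
    1 - Real.cos (angle x y) ≤ ‖x - y‖ ^ 2 / (2 * (‖x‖ * ‖y‖)) := by
  have : 0 < ‖x‖ * ‖y‖ := mul_pos (norm_pos_iff.2 hx) (norm_pos_iff.2 hy)
  rw [le_div_iff₀ (by positivity), norm_sub_sq_real]
  linarith [cos_angle_mul_norm_mul_norm x y, two_mul_le_add_sq ‖x‖ ‖y‖]

theorem abs_sub_le_of_cos_angle_mul_le {f : E → ℝ}
    (h : ∀ x y, Real.cos (angle x y) * f y ≤ f x) {x y : E} (hx : x ≠ 0)
    (hyx : ‖y - x‖ ≤ ‖x‖ / 2) : |f y - f x| ≤ 2 * f x / ‖x‖ ^ 2 * ‖y - x‖ ^ 2 := by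
  -- Both inequalities use the convention `angle z 0 = π / 2`.
  have hfx : 0 ≤ f x := by simpa using h x 0
  have hfy : 0 ≤ f y := by simpa using h y 0
  have hx' : 0 < ‖x‖ := norm_pos_iff.2 hx
  have hy : ‖x‖ / 2 ≤ ‖y‖ := by linarith [norm_sub_norm_le x y, norm_sub_rev x y]
  have hcos : 1 - Real.cos (angle x y) ≤ ‖y - x‖ ^ 2 / ‖x‖ ^ 2 := by
    refine (one_sub_cos_angle_le hx (norm_pos_iff.1 (by linarith))).trans ?_
    rw [norm_sub_rev]
    gcongr
    nlinarith
  have hsmall : ‖y - x‖ ^ 2 / ‖x‖ ^ 2 ≤ 1 / 2 := by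
    rw [div_le_iff₀ (by positivity)]
    nlinarith [norm_nonneg (y - x)]
  have hyx' : Real.cos (angle x y) * f y ≤ f x := h x y
  have hxy' : Real.cos (angle x y) * f x ≤ f y := angle_comm y x ▸ h y x
  have hfy' : f y ≤ 2 * f x := by nlinarith
  have hdiff : |f y - f x| ≤ (1 - Real.cos (angle x y)) * (2 * f x) := by
    have hcos' : 0 ≤ 1 - Real.cos (angle x y) := sub_nonneg.2 (Real.cos_le_one _)
    refine abs_le.2 ⟨?_, ?_⟩
    · linarith [mul_nonneg hcos' hfx]
    · linarith [mul_le_mul_of_nonneg_left hfy' hcos']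
  calc |f y - f x| ≤ (1 - Real.cos (angle x y)) * (2 * f x) := hdiff
    _ ≤ ‖y - x‖ ^ 2 / ‖x‖ ^ 2 * (2 * f x) := by gcongr
    _ = 2 * f x / ‖x‖ ^ 2 * ‖y - x‖ ^ 2 := by ring

theorem hasFDerivAt_zero_of_cos_angle_mul_le {f : E → ℝ}
    (h : ∀ x y, Real.cos (angle x y) * f y ≤ f x) {x : E} (hx : x ≠ 0) :
    HasFDerivAt f (0 : E →L[ℝ] ℝ) x := by
  have hbound : ∀ᶠ y in 𝓝 x, ‖f y - f x‖ ≤ 2 * f x / ‖x‖ ^ 2 * ‖‖y - x‖ ^ 2‖ := by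
    filter_upwards [Metric.closedBall_mem_nhds x (half_pos (norm_pos_iff.2 hx))] with y hy
    simpa using abs_sub_le_of_cos_angle_mul_le h hx (mem_closedBall_iff_norm.1 hy)
  simpa using ((IsBigO.of_bound _ hbound).hasFDerivAt (𝕜 := ℝ) one_lt_two).add_const (f x)

theorem eq_of_cos_angle_mul_le (hE : 1 < Module.rank ℝ E) {f : E → ℝ}
    (h : ∀ x y, Real.cos (angle x y) * f y ≤ f x) {x y : E} (hx : x ≠ 0) (hy : y ≠ 0) :
    f x = f y := by
  have hderiv : ∀ z ∈ ({0}ᶜ : Set E), HasFDerivAt f (0 : E →L[ℝ] ℝ) z := fun z hz =>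
    hasFDerivAt_zero_of_cos_angle_mul_le h hz
  exact isOpen_compl_singleton.is_const_of_fderiv_eq_zero (𝕜 := ℝ)
    (isConnected_compl_singleton_of_one_lt_rank hE 0).isPreconnected
    (fun z hz => (hderiv z hz).differentiableAt.differentiableWithinAt)
    (fun z hz => (hderiv z hz).fderiv) hx hy

end InnerProductSpace

section NormingPairs

variable {m : ℕ} {N : (Fin m → ℝ) → ℝ} {a b : Fin m → ℝ}

/-- The seminorm underlying a norm in the sense of `IsNorm`, giving access to the seminorm API. -/
def IsNorm.toSeminorm (h : IsNorm N) : Seminorm ℝ (Fin m → ℝ) :=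
  Seminorm.of N h.2.2 h.2.1

theorem IsNorm.map_zero (h : IsNorm N) : N 0 = 0 :=
  (h.1 0).2 rfl

theorem IsNorm.nonneg (h : IsNorm N) (x : Fin m → ℝ) : 0 ≤ N x :=
  apply_nonneg h.toSeminorm x

theorem IsNorm.pos (h : IsNorm N) {x : Fin m → ℝ} (hx : x ≠ 0) : 0 < N x :=
  (h.nonneg x).lt_of_ne' (mt (h.1 x).1 hx)

/-- `(a, b)` is a norming pair of `N` if the functional `x ↦ x ⬝ᵥ b` attains its dual norm in the
direction `a`. Neither vector is normalized, and `a = 0` or `b = 0` is allowed; these are the scalar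
pairs on which the Flinn condition is tested. -/
def IsNormingPair (N : (Fin m → ℝ) → ℝ) (a b : Fin m → ℝ) : Prop :=
  a ⬝ᵥ b = N a * dualNorm N b

theorem IsNorm.isNormingPair_of_forall_le (h : IsNorm N)
    (hab : ∀ x, N a * (x ⬝ᵥ b) ≤ N x * (a ⬝ᵥ b)) : IsNormingPair N a b := by
  rcases eq_or_ne a 0 with rfl | ha
  · simp [IsNormingPair, h.map_zero]
  have hNa := h.pos ha
  have hnonneg : 0 ≤ a ⬝ᵥ b := by
    have hneg := hab (-a)
    rw [neg_dotProduct, show N (-a) = N a from map_neg_eq_map h.toSeminorm a] at hneg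
    nlinarith
  have hgreatest : IsGreatest {s | ∃ x, N x ≤ 1 ∧ s = ∑ i, x i * b i} ((a ⬝ᵥ b) / N a) := by
    refine ⟨⟨(N a)⁻¹ • a, ?_, ?_⟩, ?_⟩
    · rw [h.2.1, abs_of_pos (inv_pos.2 hNa), inv_mul_cancel₀ hNa.ne']
    · rw [← dotProduct, smul_dotProduct, smul_eq_mul, div_eq_inv_mul]
    · rintro s ⟨x, hx, rfl⟩
      rw [le_div_iff₀' hNa]
      exact (hab x).trans (mul_le_of_le_one_left hnonneg hx)
  rw [IsNormingPair, dualNorm, hgreatest.csSup_eq, mul_div_cancel₀ _ hNa.ne']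

theorem IsNorm.exists_supporting_functional (h : IsNorm N) (a : Fin m → ℝ) :
    ∃ b : Fin m → ℝ, a ⬝ᵥ b = N a ∧ ∀ x, x ⬝ᵥ b ≤ N x := by
  rcases eq_or_ne a 0 with rfl | ha
  · exact ⟨0, by simp [h.map_zero], fun x => by simpa using h.nonneg x⟩
  let coord := LinearEquiv.coord ℝ (Fin m → ℝ) a ha
  have hcoord (x : ℝ ∙ a) : N a * coord x ≤ N x := by
    rw [← LinearEquiv.coord_apply_smul ℝ (Fin m → ℝ) a ha x, h.2.1, mul_comm]
    exact mul_le_mul_of_nonneg_right (le_abs_self _) (h.nonneg a)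
  obtain ⟨φ, hφa, hφ⟩ := Module.Dual.exists_extension_of_le_seminorm_real (ℝ ∙ a)
    (N a • coord.toLinearMap) (p := h.toSeminorm) hcoord
  obtain ⟨b, rfl⟩ := (dotProductEquiv ℝ (Fin m)).surjective φ
  refine ⟨b, ?_, fun x => ?_⟩
  · rw [dotProduct_comm]
    simpa [coord, LinearEquiv.coord_self] using hφa ⟨a, Submodule.mem_span_singleton_self a⟩
  · rw [dotProduct_comm]
    exact (le_abs_self _).trans (hφ x)

theorem IsLatticeNorm.isNormingPair_single (h : IsLatticeNorm N) (i : Fin m) :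
    IsNormingPair N (Pi.single i 1) (Pi.single i 1) := by
  refine h.1.isNormingPair_of_forall_le fun x => ?_
  have hcoord : |x i| * N (Pi.single i 1) ≤ N x := by
    rw [← h.1.2.1]
    refine h.2.2 _ _ fun j => ?_
    rcases eq_or_ne j i with rfl | hj
    · simp
    · simp [hj]
  simp only [dotProduct_single, Pi.single_eq_same, mul_one]
  rw [mul_comm]
  exact (mul_le_mul_of_nonneg_right (le_abs_self _) (h.1.nonneg _)).trans hcoord

theorem IsNorm.isNormingPair_one (h : IsNorm N)
    (hperm : ∀ (π : Equiv.Perm (Fin m)) (x : Fin m → ℝ), N (x ∘ π) = N x) :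
    IsNormingPair N 1 1 := by
  refine h.isNormingPair_of_forall_le fun x => ?_
  rcases m with _ | m
  · simp
  -- The triangle inequality is applied to the sum of the cyclic shifts of `x`.
  have hshift : ∑ k : Fin (m + 1), x ∘ Equiv.addRight k = (∑ i, x i) • 1 := by
    ext j
    simpa using Equiv.sum_comp (Equiv.addLeft j) x
  have hsum : N ((∑ i, x i) • 1) ≤ (m + 1 : ℕ) * N x := by
    have hsubadd := Finset.le_sum_of_subadditive N h.map_zero.le h.2.2 Finset.univ
      fun k : Fin (m + 1) => x ∘ Equiv.addRight k
    rwa [hshift, Finset.sum_congr rfl fun k _ => hperm _ x, Finset.sum_const, Finset.card_univ,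
      Fintype.card_fin, nsmul_eq_mul] at hsubadd
  rw [h.2.1] at hsum
  have := mul_le_mul_of_nonneg_right (le_abs_self (∑ i, x i)) (h.nonneg 1)
  rw [dotProduct_one, one_dotProduct_one, Fintype.card_fin]
  linarith

theorem dualNorm_comp_perm
    (hperm : ∀ (π : Equiv.Perm (Fin m)) (x : Fin m → ℝ), N (x ∘ π) = N x)
    (π : Equiv.Perm (Fin m)) (y : Fin m → ℝ) : dualNorm N (y ∘ π) = dualNorm N y := by
  unfold dualNorm
  congr 1
  ext s
  refine (Equiv.arrowCongr π (Equiv.refl ℝ)).exists_congr fun x => ?_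
  change N x ≤ 1 ∧ s = x ⬝ᵥ (y ∘ π) ↔ N (x ∘ π.symm) ≤ 1 ∧ s = (x ∘ π.symm) ⬝ᵥ y
  rw [hperm, comp_equiv_symm_dotProduct]

theorem IsNormingPair.comp_perm (hab : IsNormingPair N a b)
    (hperm : ∀ (π : Equiv.Perm (Fin m)) (x : Fin m → ℝ), N (x ∘ π) = N x)
    (π : Equiv.Perm (Fin m)) : IsNormingPair N (a ∘ π) (b ∘ π) := by
  rw [IsNormingPair, comp_equiv_dotProduct_comp_equiv, hperm, dualNorm_comp_perm hperm]
  exact hab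

theorem dotProduct_mul_dotProduct_of_proportional (hab : ∀ k l, a k * b l = a l * b k)
    (x : Fin m → ℝ) : (x ⬝ᵥ a) * (a ⬝ᵥ b) = (x ⬝ᵥ b) * (a ⬝ᵥ a) := by
  simp only [dotProduct, Finset.sum_mul_sum]
  refine Finset.sum_congr rfl fun k _ => Finset.sum_congr rfl fun l _ => ?_
  linear_combination x k * a l * hab k l

theorem IsNorm.exists_eq_mul_euclidean_of_normingPairs_proportional (h : IsNorm N) (hm : 1 < m)
    (hpair : ∀ a b, IsNormingPair N a b → ∀ k l, a k * b l = a l * b k) :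
    ∃ c : ℝ, 0 < c ∧ ∀ x, N x = c * ‖WithLp.toLp 2 x‖ := by
  have hsupport (x a : Fin m → ℝ) : (x ⬝ᵥ a) * N a ≤ N x * (a ⬝ᵥ a) := by
    obtain ⟨b, hb, hle⟩ := h.exists_supporting_functional a
    have hab : IsNormingPair N a b := h.isNormingPair_of_forall_le fun x => by
      rw [hb, mul_comm]
      exact mul_le_mul_of_nonneg_right (hle x) (h.nonneg a)
    rw [← hb, dotProduct_mul_dotProduct_of_proportional (hpair a b hab)]
    exact mul_le_mul_of_nonneg_right (hle x) (dotProduct_self_star_nonneg a)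
  let f : EuclideanSpace ℝ (Fin m) → ℝ := fun x => N x / ‖x‖
  have hf (x y : EuclideanSpace ℝ (Fin m)) :
      Real.cos (InnerProductGeometry.angle x y) * f y ≤ f x := by
    rcases eq_or_ne x 0 with rfl | hx
    · simp [f]
    rcases eq_or_ne y 0 with rfl | hy
    · simpa [f] using div_nonneg (h.nonneg x) (norm_nonneg x)
    have : 0 < ‖x‖ := norm_pos_iff.2 hx
    have : 0 < ‖y‖ := norm_pos_iff.2 hy
    have hxy : ⟪x, y⟫ * N y ≤ N x * ‖y‖ ^ 2 := by
      rw [← real_inner_self_eq_norm_sq]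
      simpa only [EuclideanSpace.inner_eq_star_dotProduct, star_trivial, dotProduct_comm] using
        hsupport x y
    calc Real.cos (InnerProductGeometry.angle x y) * f y
        = ⟪x, y⟫ * N y / (‖x‖ * ‖y‖ ^ 2) := by
          rw [InnerProductGeometry.cos_angle, div_mul_div_comm, mul_assoc, ← sq]
      _ ≤ N x * ‖y‖ ^ 2 / (‖x‖ * ‖y‖ ^ 2) := by gcongr
      _ = f x := mul_div_mul_right _ _ (by positivity)
  have hrank : 1 < Module.rank ℝ (EuclideanSpace ℝ (Fin m)) := by
    rw [← Module.finrank_eq_rank, finrank_euclideanSpace_fin]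
    exact_mod_cast hm
  let e : EuclideanSpace ℝ (Fin m) := EuclideanSpace.single ⟨0, by omega⟩ 1
  have he : e ≠ 0 := by simp [e]
  refine ⟨f e, div_pos (h.pos (mt (WithLp.ofLp_eq_zero 2).1 he)) (norm_pos_iff.2 he), fun x => ?_⟩
  rcases eq_or_ne x 0 with rfl | hx
  · simp [h.map_zero]
  · have hx' : WithLp.toLp 2 x ≠ 0 := mt (WithLp.toLp_eq_zero 2).1 hx
    rw [eq_of_cos_angle_mul_le hrank hf he hx', div_mul_cancel₀ _ (norm_ne_zero_iff.2 hx')]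

end NormingPairs

section FlinnPairs

variable {m : ℕ} {N : (Fin m → ℝ) → ℝ} {a b : Fin m → ℝ}
  {H : Type*} [NormedAddCommGroup H] [InnerProductSpace ℝ H] {u g w : Fin m → H}

theorem IsLatticeNorm.xNorm_smul (h : IsLatticeNorm N) (a : Fin m → ℝ) (hw : ∀ i, ‖w i‖ = 1) :
    XNorm N (fun i => a i • w i) = N a := by
  simp only [XNorm, norm_smul, hw, mul_one, Real.norm_eq_abs, ← h.2.1 a]

theorem IsLatticeNorm.xDualNorm_smul (h : IsLatticeNorm N) (b : Fin m → ℝ)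
    (hw : ∀ i, ‖w i‖ = 1) : XDualNorm N (fun i => b i • w i) = dualNorm N b := by
  unfold XDualNorm dualNorm
  congr 1
  ext s
  constructor
  · rintro ⟨f, hf, rfl⟩
    refine ⟨fun i => ⟪w i, f i⟫, (h.2.2 _ _ fun i => ?_).trans hf, ?_⟩
    · simpa [hw] using abs_real_inner_le_norm (w i) (f i)
    · simp only [real_inner_smul_left, mul_comm]
  · rintro ⟨x, hx, rfl⟩
    refine ⟨fun i => x i • w i, (h.xNorm_smul x hw).trans_le hx, ?_⟩
    simp [real_inner_smul_left, real_inner_smul_right, hw, mul_comm]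

theorem IsVFlinnPair.sum_mul_sum_nonneg (hF : IsVFlinnPair N u g) (h : IsLatticeNorm N)
    (hab : IsNormingPair N a b) (hw : ∀ i, ‖w i‖ = 1) :
    0 ≤ (∑ i, a i * ⟪g i, w i⟫) * ∑ i, b i * ⟪u i, w i⟫ := by
  have hnorming : ∑ i, ⟪b i • w i, a i • w i⟫ =
      XNorm N (fun i => a i • w i) * XDualNorm N fun i => b i • w i := by
    rw [h.xNorm_smul a hw, h.xDualNorm_smul b hw, ← hab]
    simp [dotProduct, real_inner_smul_left, real_inner_smul_right, hw]
  simpa only [real_inner_smul_left, real_inner_smul_right, real_inner_comm] using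
    hF.2 _ _ hnorming

theorem IsVFlinnPair.inner_mul_inner_comm (hF : IsVFlinnPair N u g) (h : IsLatticeNorm N)
    (k : Fin m) (x y : H) : ⟪g k, x⟫ * ⟪u k, y⟫ = ⟪g k, y⟫ * ⟪u k, x⟫ := by
  refine apply_mul_apply_comm_of_mul_nonneg_on_sphere (φ := innerₛₗ ℝ (g k))
    (ψ := innerₛₗ ℝ (u k)) (fun w hw => ?_) x y
  simpa [Pi.single_apply] using
    hF.sum_mul_sum_nonneg h (h.isNormingPair_single k) (w := fun _ => w) fun _ => hw

theorem IsVFlinnPair.weighted_inner_mul_inner_comm (hF : IsVFlinnPair N u g)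
    (h : IsLatticeNorm N) (hH : 1 < Module.rank ℝ H) (hab : IsNormingPair N a b) (i j : Fin m)
    (x y : H) :
    (a i * ⟪g i, x⟫) * (b j * ⟪u j, y⟫) = (a j * ⟪g j, y⟫) * (b i * ⟪u i, x⟫) := by
  let pairing (c : Fin m → ℝ) (f : Fin m → H) : (Fin m → H) →ₗ[ℝ] ℝ :=
    LinearMap.lsum ℝ (fun _ => H) ℝ fun k => c k • innerₛₗ ℝ (f k)
  have hpairing (c f k z) : pairing c f (Pi.single k z) = c k * ⟪f k, z⟫ :=
    LinearMap.lsum_piSingle ..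
  have hsphere (v : Fin m → H) (hv : ‖v‖ = 1) : 0 ≤ pairing a g v * pairing b u v := by
    choose w hw hgw huw using fun k => exists_norm_eq_one_inner_eq_inner hH
      (hF.inner_mul_inner_comm h k) ((norm_le_pi_norm v k).trans_eq hv)
    simpa [pairing, hgw, huw] using hF.sum_mul_sum_nonneg h hab hw
  simpa only [hpairing] using
    apply_mul_apply_comm_of_mul_nonneg_on_sphere hsphere (Pi.single i x) (Pi.single j y)

theorem IsVFlinnPair.normingPair_proportional (hF : IsVFlinnPair N u g)
    (h : IsSymmLatticeNorm N) (hH : 1 < Module.rank ℝ H) {i j : Fin m} (hij : i ≠ j)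
    (hgi : g i ≠ 0) (huj : u j ≠ 0) (hab : IsNormingPair N a b) (k l : Fin m) :
    a k * b l = a l * b k := by
  rcases eq_or_ne k l with rfl | hkl
  · rfl
  obtain ⟨π, hi, hj⟩ : ∃ π : Equiv.Perm (Fin m), π i = k ∧ π j = l :=
    MulAction.is_two_pretransitive_iff.1
      (Equiv.Perm.isMultiplyPretransitive (Fin m) 2) hij hkl
  have hone := hF.weighted_inner_mul_inner_comm h.1 hH (h.1.1.isNormingPair_one h.2) i j (g i) (u j)
  have hperm :=
    hF.weighted_inner_mul_inner_comm h.1 hH (hab.comp_perm h.2 π) i j (g i) (u j)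
  simp only [Function.comp_apply, hi, hj, Pi.one_apply, one_mul] at hone hperm
  have hne : ⟪g i, g i⟫ * ⟪u j, u j⟫ ≠ (0 : ℝ) :=
    mul_ne_zero (inner_self_ne_zero.2 hgi) (inner_self_ne_zero.2 huj)
  apply mul_right_cancel₀ hne
  linear_combination hperm - a l * b k * hone

end FlinnPairs

theorem isLpNorm_of_exists_eq_mul_euclidean {m : ℕ} {N : (Fin m → ℝ) → ℝ}
    (h : ∃ c : ℝ, 0 < c ∧ ∀ x, N x = c * ‖WithLp.toLp 2 x‖) : IsLpNorm N := by
  obtain ⟨c, hc, hN⟩ := h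
  refine Or.inl ⟨2, one_le_two, c, hc, fun x => ?_⟩
  rw [hN, EuclideanSpace.norm_eq, Real.sqrt_eq_rpow]
  simp only [Real.norm_eq_abs, Real.rpow_two]

theorem flinn_elements_supported_on_single_coordinate_general
    {m : ℕ} (N : (Fin m → ℝ) → ℝ) (hN : IsSymmLatticeNorm N)
    (hN2 : ¬ ∃ c : ℝ, 0 < c ∧ ∀ x, N x = c * ‖WithLp.toLp 2 x‖)
    {H : Type*} [NormedAddCommGroup H] [InnerProductSpace ℝ H] (hdim : 2 ≤ Module.rank ℝ H)
    (u : Fin m → H) (hu : IsVFlinn N u) :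
    ∃ i₀ : Fin m, ∀ i, i ≠ i₀ → u i = 0 := by
  obtain ⟨g, hF⟩ := hu
  obtain ⟨i, hgi⟩ := Function.ne_iff.1 hF.1
  refine ⟨i, fun j hji => by_contra fun huj => hN2 ?_⟩
  have hm : 1 < m := by
    omega
  exact hN.1.1.exists_eq_mul_euclidean_of_normingPairs_proportional hm fun _ _ hab =>
    hF.normingPair_proportional hN (Cardinal.one_lt_two.trans_le hdim) hji.symm hgi huj hab

theorem flinn_elements_supported_on_single_coordinate
    {m : ℕ} (hm : 3 ≤ m) (N : (Fin m → ℝ) → ℝ)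
    (hN : IsSymmLatticeNorm N)
    (hP' : ∀ t : ℝ, 0 < t →
      dualNorm N (Pi.single (⟨0, by omega⟩ : Fin m) (1 : ℝ)) <
      dualNorm N (Pi.single (⟨0, by omega⟩ : Fin m) (1 : ℝ) +
        t • (Pi.single (⟨1, by omega⟩ : Fin m) (1 : ℝ) : Fin m → ℝ)))
    (hNp : ¬ IsLpNorm N)
    {H : Type*} [NormedAddCommGroup H] [InnerProductSpace ℝ H] [CompleteSpace H]
    (hdim : 2 ≤ Module.rank ℝ H)
    (hHcase : FiniteDimensional ℝ H ∨ TopologicalSpace.SeparableSpace H)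
    (u : Fin m → H) (hu : IsVFlinn N u) :
    ∃ i₀ : Fin m, ∀ i, i ≠ i₀ → u i = 0 :=
  flinn_elements_supported_on_single_coordinate_general N hN
    (fun hN2 => hNp (isLpNorm_of_exists_eq_mul_euclidean hN2)) hdim u hu
end

section
/- Let X and Y be real normed spaces and let U : X → Y be a surjective linear isometry. If (u, f) is a Flinn pair in X, then (U u, f ∘ U⁻¹) is a Flinn pair in Y. Consequently U maps the set of Flinn elements of X onto the set of Flinn elements of Y. -/
/-- `(u, f)` is a Flinn pair in the real normed space `X`. -/
def IsFlinnPair {X : Type*} [NormedAddCommGroup X] [NormedSpace ℝ X]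
    (u : X) (f : X →L[ℝ] ℝ) : Prop :=
  f ≠ 0 ∧ ∀ (x : X) (xs : X →L[ℝ] ℝ), xs x = ‖x‖ * ‖xs‖ → 0 ≤ f x * xs u

/-- `u` is a Flinn element of the real normed space `X`. -/
def IsFlinnElem {X : Type*} [NormedAddCommGroup X] [NormedSpace ℝ X] (u : X) : Prop :=
  ∃ f : X →L[ℝ] ℝ, IsFlinnPair u f

section

variable {X Y : Type*} [NormedAddCommGroup X] [NormedSpace ℝ X]
  [NormedAddCommGroup Y] [NormedSpace ℝ Y]

theorem IsFlinnPair.map (U : X ≃ₗᵢ[ℝ] Y) {u : X} {f : X →L[ℝ] ℝ} (h : IsFlinnPair u f) :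
    IsFlinnPair (U u) (f.comp U.symm.toLinearIsometry.toContinuousLinearMap) := by
  obtain ⟨hf, hnonneg⟩ := h
  refine ⟨fun hzero => hf ?_, fun y φ hφ => ?_⟩
  · ext x
    simpa using DFunLike.congr_fun hzero (U x)
  · let ψ : X →L[ℝ] ℝ := φ.comp (U : X →L[ℝ] Y)
    have hψ : ψ (U.symm y) = ‖U.symm y‖ * ‖ψ‖ := calc
      ψ (U.symm y) = φ y := congrArg φ (U.apply_symm_apply y)
      _ = ‖y‖ * ‖φ‖ := hφ
      _ = ‖U.symm y‖ * ‖ψ‖ := by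
        rw [U.symm.norm_map, φ.opNorm_comp_linearIsometryEquiv U]
    exact hnonneg (U.symm y) ψ hψ

theorem IsFlinnElem.map (U : X ≃ₗᵢ[ℝ] Y) {u : X} : IsFlinnElem u → IsFlinnElem (U u)
  | ⟨_, hf⟩ => ⟨_, hf.map U⟩

theorem isFlinnElem_map_iff (U : X ≃ₗᵢ[ℝ] Y) {u : X} : IsFlinnElem (U u) ↔ IsFlinnElem u :=
  ⟨fun h => by simpa only [U.symm_apply_apply] using h.map U.symm, fun h => h.map U⟩

end

/-- A surjective linear isometry maps Flinn pairs to Flinn pairs and the set of Flinn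
elements onto the set of Flinn elements. -/
theorem surjective_isometry_maps_flinn_pairs_and_elements
    {X Y : Type*} [NormedAddCommGroup X] [NormedSpace ℝ X]
    [NormedAddCommGroup Y] [NormedSpace ℝ Y]
    (U : X ≃ₗᵢ[ℝ] Y) :
    (∀ (u : X) (f : X →L[ℝ] ℝ), IsFlinnPair u f →
      IsFlinnPair (U u) (f.comp U.symm.toLinearIsometry.toContinuousLinearMap)) ∧
    U '' {u : X | IsFlinnElem u} = {v : Y | IsFlinnElem v} := by
  refine ⟨fun _ _ h => h.map U, ?_⟩
  rw [U.image_eq_preimage_symm]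
  exact Set.ext fun _ => isFlinnElem_map_iff U.symm
end
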